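/- Assume the integrality condition on (μ,ν). Then the normalized K-Bessel function x ↦ K̃_{ν/2}(x) belongs to L²(ℝ_+, x^{μ+ν+1}dx) and is an eigenfunction of D_{μ,ν} with eigenvalue λ_0^{μ,ν} = 0, i.e. D_{μ,ν} K̃_{ν/2} = 0 on ℝ_+. -/

import Mathlib

open MeasureTheory Real Filter Set Metric

noncomputable section

/-- Normalized Bessel function of the first kind: `J̃_α(x) = (x/2)^{-α} J_α(x)`,
given by its (entire) power series. -/
def besselJt (α x : ℝ) : ℝ :=
  ∑' m : ℕ, (-1) ^ m / (m.factorial * Real.Gamma (m + α + 1)) * (x / 2) ^ (2 * m)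

/-- Bessel function of the first kind `J_α`. -/
def besselJ (α x : ℝ) : ℝ :=
  ∑' m : ℕ, (-1) ^ m / (m.factorial * Real.Gamma (m + α + 1)) * (x / 2) ^ (2 * (m : ℝ) + α)

/-- Normalized modified Bessel function `Ĩ_α(x) = (x/2)^{-α} I_α(x)`,
given by its (entire, even) power series. -/
def besselIt (α x : ℝ) : ℝ :=
  ∑' m : ℕ, (x / 2) ^ (2 * m) / (m.factorial * Real.Gamma (m + α + 1))

/-- Modified Bessel function of the first kind `I_α`. -/
def besselI (α x : ℝ) : ℝ :=
  ∑' m : ℕ, (x / 2) ^ (2 * (m : ℝ) + α) / (m.factorial * Real.Gamma (m + α + 1))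

/-- Modified Bessel function of the second kind,
`K_α(x) = lim_{β→α} (π/2)(I_{−β}(x) − I_β(x))/sin(βπ)`. -/
def besselK (α x : ℝ) : ℝ :=
  limUnder (nhdsWithin α {α}ᶜ) fun β =>
    Real.pi / 2 * (besselI (-β) x - besselI β x) / Real.sin (β * Real.pi)

/-- Normalized K-Bessel function `K̃_α(x) = (x/2)^{-α} K_α(x)`. -/
def besselKt (α x : ℝ) : ℝ := (x / 2) ^ (-α) * besselK α x

/-- Normalized Gegenbauer polynomial `C̃_n^λ = Γ(λ) C_n^λ`, where `C_n^λ` is defined via the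
generating function `(1 − 2xt + t²)^{−λ} = Σ_{n≥0} C_n^λ(x) tⁿ`; explicitly,
`C̃_n^λ(x) = Σ_{k=0}^{⌊n/2⌋} (−1)^k Γ(λ+n−k)/(k!(n−2k)!) (2x)^{n−2k}`.
This expression also gives the limit value `C̃_n^0 = lim_{λ→0+} Γ(λ) C_n^λ` for `n ≥ 1`. -/
def gegenbauerCt (n : ℕ) (l x : ℝ) : ℝ :=
  ∑ k ∈ Finset.range (n / 2 + 1),
    (-1) ^ k * Real.Gamma (l + n - k) / (k.factorial * (n - 2 * k).factorial)
      * (2 * x) ^ (n - 2 * k)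

/-- Laguerre polynomial `L_n^μ(x) = Σ_{k=0}^n (−1)^k binom(n+μ, n−k) x^k/k!`
(with nonnegative integer parameter `μ`). -/
def laguerreL (n μ : ℕ) (x : ℝ) : ℝ :=
  ∑ k ∈ Finset.range (n + 1),
    (-1) ^ k * (Nat.choose (n + μ) (n - k)) * x ^ k / k.factorial

/-- The Euler operator `θ = x d/dx`. -/
def eulerOp (u : ℝ → ℝ) : ℝ → ℝ := fun x => x * deriv u x

/-- `(θ+c)(θ+c+ν)u − x² u`, i.e. the operator `Q_ν(θ+c)` applied to `u`. -/
def besselQ (ν c : ℝ) (u : ℝ → ℝ) : ℝ → ℝ := fun x =>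
  eulerOp (fun y => eulerOp u y + (c + ν) * u y) x
    + c * (eulerOp u x + (c + ν) * u x) - x ^ 2 * u x

/-- The fourth order differential operator
`D_{μ,ν} = x^{−2}((θ+μ)(θ+μ+ν) − x²)(θ(θ+ν) − x²)`. -/
def Dop (μ ν : ℝ) (u : ℝ → ℝ) : ℝ → ℝ := fun x =>
  besselQ ν μ (besselQ ν 0 u) x / x ^ 2

/-- The generating function
`G^{μ,ν}(t,x) = (1−t)^{−(μ+ν+2)/2} Ĩ_{μ/2}(tx/(1−t)) K̃_{ν/2}(x/(1−t))`. -/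
def genFun (μ ν t x : ℝ) : ℝ :=
  (1 - t) ^ (-(μ + ν + 2) / 2) * besselIt (μ / 2) (t * x / (1 - t))
    * besselKt (ν / 2) (x / (1 - t))

/-- The eigenfunctions `Λ_j^{μ,ν}`, defined as the Taylor coefficients in `t` at `t = 0` of the
generating function `G^{μ,ν}(t,x) = Σ_{j≥0} Λ_j^{μ,ν}(x) t^j`. -/
def LambdaF (μ ν : ℝ) (j : ℕ) (x : ℝ) : ℝ :=
  iteratedDeriv j (fun t => genFun μ ν t x) 0 / j.factorial

/-- The integrality condition: `μ ≥ ν ≥ −1` are integers of the same parity,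
not both equal to `−1`. -/
def IntCond (μ ν : ℤ) : Prop :=
  -1 ≤ ν ∧ ν ≤ μ ∧ Even (μ - ν) ∧ ¬(μ = -1 ∧ ν = -1)

end

/-!
Put `H_s(z) = ∫₀^∞ t^{s-1} e^{-t-z/t} dt` and `A_b(z) = ∑ z^m / (m! Γ(m+b+1))`, so that
`I_b(x) = (x/2)^b A_b(x²/4)`. Both families satisfy a three-term recurrence and are shifted by
differentiation: `H_s' = -H_{s-1}` and `A_b' = A_{b+1}`. Hence `z A_{b+1} A_{-b} - A_b A_{-b-1}`
and `A_b H_{b+1} + z A_{b+1} H_b`, which are Wronskians, are constant, and their values at `z = 0`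
are `sin(πb)/π`, by Euler's reflection formula, and `1`. Combining the two expresses `H_{-b}`
through `A_b` and `A_{-b}` by the very quotient whose limit defines `K`, so that
`K̃_a(x) = H_{-a}(x²/4) / 2` for every real order `a`.

The differential equation `θ(θ+ν) K̃_{ν/2} = x² K̃_{ν/2}` is the recurrence of `H`. For
integrability, `e^{-y} ≤ k^k y^{-k}` gives `K̃_a(x) = O(x^{-2k})` on `ℝ_+` for every
`k > max(a, 0)`: near `0` one takes `k` close to `max(a, 0)`, and near `∞` one takes `k` large.
-/

section

open Asymptotics
open scoped Topology

variable {a b k p s t x z : ℝ}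

/-! ### The generalized gamma function -/

/-- The integrand of `extGamma`, normalized so that `z = 0` gives the integrand of `Real.Gamma`. -/
noncomputable def extGammaIntegrand (s z t : ℝ) : ℝ := exp (-t - z / t) * t ^ (s - 1)

/-- The generalized gamma function `H_s(z) = ∫₀^∞ t^{s-1} e^{-t-z/t} dt` of Chaudhry and Zubair,
which equals `2 z^{s/2} K_s(2√z)` for `z > 0`. -/
noncomputable def extGamma (s z : ℝ) : ℝ := ∫ t in Ioi 0, extGammaIntegrand s z t

lemma extGammaIntegrand_nonneg (ht : 0 ≤ t) : 0 ≤ extGammaIntegrand s z t := by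
  unfold extGammaIntegrand
  positivity

lemma norm_extGammaIntegrand (ht : 0 ≤ t) :
    ‖extGammaIntegrand s z t‖ = extGammaIntegrand s z t :=
  norm_of_nonneg (extGammaIntegrand_nonneg ht)

lemma extGammaIntegrand_zero (s t : ℝ) : extGammaIntegrand s 0 t = exp (-t) * t ^ (s - 1) := by
  simp [extGammaIntegrand]

lemma antitone_extGammaIntegrand (ht : 0 ≤ t) : Antitone fun z => extGammaIntegrand s z t := by
  intro z w hzw
  simp only [extGammaIntegrand]
  gcongr

lemma continuousOn_extGammaIntegrand (s z : ℝ) :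
    ContinuousOn (extGammaIntegrand s z) (Ioi 0) := by
  intro t ht
  have ht : t ≠ 0 := ne_of_gt ht
  have hpow : ContinuousAt (fun t : ℝ => t ^ (s - 1)) t := continuousAt_rpow_const _ _ (Or.inl ht)
  unfold extGammaIntegrand
  exact ContinuousAt.continuousWithinAt (by fun_prop (disch := assumption))

lemma aestronglyMeasurable_extGammaIntegrand (s z : ℝ) :
    AEStronglyMeasurable (extGammaIntegrand s z) (volume.restrict (Ioi 0)) :=
  (continuousOn_extGammaIntegrand s z).aestronglyMeasurable measurableSet_Ioi

lemma hasDerivAt_extGammaIntegrand (ht : t ≠ 0) :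
    HasDerivAt (fun z => extGammaIntegrand s z t) (-extGammaIntegrand (s - 1) z t) z := by
  have hexp : HasDerivAt (fun z => -t - z / t) (-(1 / t)) z :=
    ((hasDerivAt_id z).div_const t).const_sub (-t)
  refine (hexp.exp.mul_const (t ^ (s - 1))).congr_deriv ?_
  rw [extGammaIntegrand, rpow_sub_one ht (s - 1)]
  ring

lemma exp_neg_le_rpow_mul_rpow_neg (hk : 0 < k) (hx : 0 < x) : exp (-x) ≤ k ^ k * x ^ (-k) := by
  have hroot : x / k ≤ exp (x / k) := by linarith [add_one_le_exp (x / k)]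
  have hpow : x ^ k ≤ k ^ k * exp x := by
    calc x ^ k = k ^ k * (x / k) ^ k := by
          rw [← mul_rpow hk.le (by positivity), mul_div_cancel₀ _ hk.ne']
      _ ≤ k ^ k * exp (x / k) ^ k := by gcongr
      _ = k ^ k * exp x := by rw [← exp_mul, div_mul_cancel₀ _ hk.ne']
  rw [exp_neg, rpow_neg hx.le, ← div_eq_mul_inv, le_div_iff₀ (by positivity),
    inv_mul_le_iff₀ (exp_pos x), mul_comm (exp x)]
  exact hpow

lemma extGammaIntegrand_le (hk : 0 < k) (hz : 0 < z) (ht : 0 < t) :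
    extGammaIntegrand s z t ≤ k ^ k * z ^ (-k) * (exp (-t) * t ^ (s + k - 1)) := by
  have hdiv : (z / t) ^ (-k) = z ^ (-k) * t ^ k := by
    rw [div_rpow hz.le ht.le, rpow_neg ht.le, div_inv_eq_mul]
  calc extGammaIntegrand s z t = exp (-t) * t ^ (s - 1) * exp (-(z / t)) := by
        rw [extGammaIntegrand, sub_eq_add_neg, exp_add]
        ring
    _ ≤ exp (-t) * t ^ (s - 1) * (k ^ k * (z / t) ^ (-k)) := by
        gcongr
        exact exp_neg_le_rpow_mul_rpow_neg hk (by positivity)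
    _ = k ^ k * z ^ (-k) * (exp (-t) * t ^ (s + k - 1)) := by
        rw [hdiv, show s + k - 1 = s - 1 + k by ring, rpow_add ht]
        ring

lemma integrableOn_extGammaIntegrand (s : ℝ) (hz : 0 < z) :
    IntegrableOn (extGammaIntegrand s z) (Ioi 0) := by
  have hk : 0 < |s| + 1 := by positivity
  have hsk : 0 < s + (|s| + 1) := by linarith [neg_abs_le s]
  refine ((GammaIntegral_convergent hsk).const_mul
      ((|s| + 1) ^ (|s| + 1) * z ^ (-(|s| + 1)))).mono'
    (aestronglyMeasurable_extGammaIntegrand s z)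
    (ae_restrict_of_forall_mem measurableSet_Ioi fun t ht => ?_)
  rw [norm_extGammaIntegrand (le_of_lt ht)]
  exact extGammaIntegrand_le hk hz ht

lemma extGamma_nonneg (s z : ℝ) : 0 ≤ extGamma s z :=
  setIntegral_nonneg measurableSet_Ioi fun _ ht => extGammaIntegrand_nonneg (le_of_lt ht)

lemma extGamma_le (hk : 0 < k) (hsk : 0 < s + k) (hz : 0 < z) :
    extGamma s z ≤ k ^ k * z ^ (-k) * Gamma (s + k) := by
  rw [Gamma_eq_integral hsk, ← integral_const_mul]
  exact setIntegral_mono_on (integrableOn_extGammaIntegrand s hz)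
    ((GammaIntegral_convergent hsk).const_mul _) measurableSet_Ioi
    fun _ ht => extGammaIntegrand_le hk hz ht

lemma hasDerivAt_extGamma (s : ℝ) (hz : 0 < z) :
    HasDerivAt (extGamma s) (-extGamma (s - 1) z) z := by
  have hdom : ∀ᵐ t ∂volume.restrict (Ioi 0), ∀ w ∈ Ioi (z / 2),
      ‖-extGammaIntegrand (s - 1) w t‖ ≤ extGammaIntegrand (s - 1) (z / 2) t := by
    refine ae_restrict_of_forall_mem measurableSet_Ioi fun t ht w hw => ?_
    rw [norm_neg, norm_extGammaIntegrand (le_of_lt ht)]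
    exact antitone_extGammaIntegrand (le_of_lt ht) (le_of_lt hw)
  have hderiv := (hasDerivAt_integral_of_dominated_loc_of_deriv_le
    (Ioi_mem_nhds (half_lt_self hz))
    (Eventually.of_forall fun w => aestronglyMeasurable_extGammaIntegrand s w)
    (integrableOn_extGammaIntegrand s hz)
    (aestronglyMeasurable_extGammaIntegrand (s - 1) z).neg hdom
    (integrableOn_extGammaIntegrand (s - 1) (half_pos hz))
    (ae_restrict_of_forall_mem measurableSet_Ioi fun t ht w _ =>
      hasDerivAt_extGammaIntegrand (ne_of_gt ht))).2
  rwa [integral_neg] at hderiv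

lemma tendsto_extGamma_nhdsGT_zero (hs : 0 < s) :
    Tendsto (extGamma s) (𝓝[>] 0) (𝓝 (Gamma s)) := by
  have hint : IntegrableOn (extGammaIntegrand s 0) (Ioi 0) := by
    simpa only [← extGammaIntegrand_zero] using GammaIntegral_convergent hs
  simp only [Gamma_eq_integral hs, ← extGammaIntegrand_zero]
  refine tendsto_integral_filter_of_dominated_convergence (extGammaIntegrand s 0)
    (Eventually.of_forall fun z => aestronglyMeasurable_extGammaIntegrand s z) ?_ hint ?_
  · filter_upwards [self_mem_nhdsWithin] with z hz
    refine ae_restrict_of_forall_mem measurableSet_Ioi fun t ht => ?_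
    rw [norm_extGammaIntegrand (le_of_lt ht)]
    exact antitone_extGammaIntegrand (le_of_lt ht) (le_of_lt hz)
  · exact ae_restrict_of_forall_mem measurableSet_Ioi fun t ht =>
      (hasDerivAt_extGammaIntegrand (ne_of_gt ht)).continuousAt.tendsto.mono_left
        nhdsWithin_le_nhds

lemma rpow_le_rpow_add_rpow_of_mem_Icc {r u v : ℝ} (ht : 0 < t) (hr : r ∈ Icc u v) :
    t ^ r ≤ t ^ u + t ^ v := by
  rcases le_total t 1 with h | h
  · exact (rpow_le_rpow_of_exponent_ge ht h hr.1).trans (le_add_of_nonneg_right (by positivity))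
  · exact (rpow_le_rpow_of_exponent_le h hr.2).trans (le_add_of_nonneg_left (by positivity))

lemma continuous_extGamma_left (hz : 0 < z) : Continuous fun s => extGamma s z := by
  refine continuous_iff_continuousAt.2 fun s => continuousAt_of_dominated
    (bound := fun t => extGammaIntegrand (s - 1) z t + extGammaIntegrand (s + 1) z t)
    (Eventually.of_forall fun r => aestronglyMeasurable_extGammaIntegrand r z) ?_
    ((integrableOn_extGammaIntegrand _ hz).add (integrableOn_extGammaIntegrand _ hz)) ?_
  · filter_upwards [Icc_mem_nhds (sub_one_lt s) (lt_add_one s)] with r hr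
    refine ae_restrict_of_forall_mem measurableSet_Ioi fun t ht => ?_
    have ht : 0 < t := ht
    rw [norm_extGammaIntegrand ht.le]
    unfold extGammaIntegrand
    rw [← mul_add]
    gcongr
    exact rpow_le_rpow_add_rpow_of_mem_Icc ht ⟨by linarith [hr.1], by linarith [hr.2]⟩
  · refine ae_restrict_of_forall_mem measurableSet_Ioi fun t ht => ?_
    have hpow : Continuous fun r : ℝ => t ^ r := continuous_const_rpow (ne_of_gt ht)
    unfold extGammaIntegrand
    fun_prop

lemma integral_comp_const_div_Ioi {E : Type*} [NormedAddCommGroup E] [NormedSpace ℝ E]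
    (g : ℝ → E) {c : ℝ} (hc : 0 < c) :
    ∫ t in Ioi 0, (c / t ^ 2) • g (c / t) = ∫ t in Ioi 0, g t := by
  have hinv := integral_comp_rpow_Ioi (fun t => g (c * t)) (p := -1) (by norm_num)
  have hscale := integral_comp_mul_left_Ioi' g 0 hc
  rw [mul_zero] at hscale
  rw [← hscale, ← hinv, ← integral_smul]
  refine setIntegral_congr_fun measurableSet_Ioi fun t ht => ?_
  have ht : 0 < t := ht
  have hsq : t ^ ((-1 : ℝ) - 1) = (t ^ 2)⁻¹ := by
    rw [show (-1 : ℝ) - 1 = -(2 : ℕ) by norm_num, rpow_neg ht.le, rpow_natCast]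
  simp only [smul_smul, hsq, rpow_neg_one, abs_neg, abs_one, one_mul, div_eq_mul_inv]

lemma extGamma_neg (s : ℝ) (hz : 0 < z) : extGamma (-s) z = z ^ (-s) * extGamma s z := by
  unfold extGamma
  rw [← integral_comp_const_div_Ioi (extGammaIntegrand (-s) z) hz, ← integral_const_mul]
  refine setIntegral_congr_fun measurableSet_Ioi fun t ht => ?_
  have ht : 0 < t := ht
  have hpow : (z / t) ^ (-s - 1) = z ^ (-s) * t ^ (s - 1) * (t ^ 2 / z) := by
    rw [div_rpow hz.le ht.le, rpow_sub_one hz.ne', rpow_sub_one ht.ne', rpow_sub_one ht.ne',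
      rpow_neg ht.le]
    field_simp
  simp only [extGammaIntegrand, smul_eq_mul, hpow, div_div_cancel₀ hz.ne']
  rw [neg_sub_comm]
  field_simp

-- Compare the derivatives of the two sides of the reflection formula `extGamma_neg`.
lemma extGamma_add_one (s : ℝ) (hz : 0 < z) :
    extGamma (s + 1) z = s * extGamma s z + z * extGamma (s - 1) z := by
  have hprod : HasDerivAt (fun z => z ^ (-s) * extGamma s z)
      (-s * z ^ (-s - 1) * extGamma s z + z ^ (-s) * -extGamma (s - 1) z) z :=
    (hasDerivAt_rpow_const (Or.inl hz.ne')).mul (hasDerivAt_extGamma s hz)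
  have hrefl : (fun z => z ^ (-s) * extGamma s z) =ᶠ[𝓝 z] extGamma (-s) := by
    filter_upwards [Ioi_mem_nhds hz] with w hw using (extGamma_neg s hw).symm
  have hderiv := (hasDerivAt_extGamma (-s) hz).unique (hrefl.hasDerivAt_iff.1 hprod)
  have hneg := extGamma_neg (s + 1) hz
  rw [neg_add'] at hneg
  rw [hneg, rpow_sub_one hz.ne'] at hderiv
  have hpow : z ^ (-s) ≠ 0 := by positivity
  field_simp at hderiv
  linarith

/-! ### The Bessel–Clifford function -/

/-- The coefficients of `besselClifford b`. They vanish when `m + b + 1` is a pole of `Γ`, because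
`Real.Gamma` and inversion take the value `0` there and at `0`. -/
noncomputable def besselCliffordCoeff (b : ℝ) (m : ℕ) : ℝ := (m.factorial * Gamma (m + b + 1))⁻¹

/-- The Bessel–Clifford function `A_b(z) = ∑ z^m / (m! Γ(m+b+1))`, an entire function of `z` with
`I_b(x) = (x/2)^b A_b(x²/4)`. -/
noncomputable def besselClifford (b z : ℝ) : ℝ := ∑' m, besselCliffordCoeff b m * z ^ m

lemma inv_Gamma_eq_mul_inv_Gamma_add_one (s : ℝ) : (Gamma s)⁻¹ = s * (Gamma (s + 1))⁻¹ := by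
  have h := Complex.one_div_Gamma_eq_self_mul_one_div_Gamma_add_one s
  rw [← Complex.ofReal_one, ← Complex.ofReal_add, Complex.Gamma_ofReal, Complex.Gamma_ofReal] at h
  exact_mod_cast h

lemma add_one_mul_besselCliffordCoeff_add_one (b : ℝ) (m : ℕ) :
    (m + 1) * besselCliffordCoeff b (m + 1) = besselCliffordCoeff (b + 1) m := by
  have hm : (m + 1 : ℝ) ≠ 0 := by positivity
  simp only [besselCliffordCoeff, Nat.factorial_succ, Nat.cast_mul, Nat.cast_add_one]
  rw [show (m : ℝ) + 1 + b + 1 = m + (b + 1) + 1 by ring]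
  field_simp

lemma besselCliffordCoeff_eq_mul (b : ℝ) (m : ℕ) :
    besselCliffordCoeff b m = (m + b + 1) * besselCliffordCoeff (b + 1) m := by
  simp only [besselCliffordCoeff, mul_inv, ← add_assoc (m : ℝ) b 1]
  rw [inv_Gamma_eq_mul_inv_Gamma_add_one (m + b + 1)]
  ring

lemma one_le_Gamma_of_two_le (hs : 2 ≤ s) : 1 ≤ Gamma s :=
  Gamma_two.symm.le.trans (Gamma_strictMonoOn_Ici.monotoneOn self_mem_Ici hs hs)

lemma summable_besselClifford (b z : ℝ) : Summable fun m => besselCliffordCoeff b m * z ^ m := by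
  refine (summable_pow_div_factorial |z|).of_norm_bounded_eventually_nat ?_
  filter_upwards [eventually_ge_atTop ⌈1 - b⌉₊] with m hm
  have hΓ : 1 ≤ Gamma (m + b + 1) := one_le_Gamma_of_two_le (by linarith [Nat.ceil_le.1 hm])
  rw [norm_mul, norm_pow, besselCliffordCoeff, norm_of_nonneg (by positivity), norm_eq_abs,
    inv_mul_eq_div]
  gcongr
  exact le_mul_of_one_le_right (by positivity) hΓ

lemma hasDerivAt_tsum_mul_pow {𝕜 : Type*} [RCLike 𝕜] {c : ℕ → 𝕜}
    (hc : ∀ z : 𝕜, Summable fun m : ℕ => (m + 1) * c (m + 1) * z ^ m) (z : 𝕜) :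
    HasDerivAt (fun w => ∑' m, c m * w ^ m) (∑' m : ℕ, (m + 1) * c (m + 1) * z ^ m) z := by
  have hshift : ∀ (w : 𝕜) (m : ℕ), c (m + 1) * ((m + 1 : ℕ) * w ^ (m + 1 - 1))
      = (m + 1) * c (m + 1) * w ^ m := by
    intro w m
    push_cast
    ring
  have hsum : ∀ w : 𝕜, Summable fun m : ℕ => c m * (m * w ^ (m - 1)) := fun w => by
    rw [← summable_nat_add_iff 1]
    simpa only [hshift] using hc w
  have hbound : ∀ (m : ℕ), ∀ w ∈ ball (0 : 𝕜) (‖z‖ + 1),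
      ‖c m * (m * w ^ (m - 1))‖ ≤ ‖c m * (m * ((‖z‖ + 1 : ℝ) : 𝕜) ^ (m - 1))‖ := by
    intro m w hw
    have hw : ‖w‖ ≤ ‖z‖ + 1 := (mem_ball_zero_iff.1 hw).le
    have hR : |‖z‖ + 1| = ‖z‖ + 1 := abs_of_nonneg (by positivity)
    simp only [norm_mul, norm_pow, RCLike.norm_ofReal, hR]
    gcongr
  have hderiv := hasDerivAt_tsum_of_isPreconnected (hsum (‖z‖ + 1 : ℝ)).norm isOpen_ball
    (convex_ball 0 _).isPreconnected (fun m w _ => (hasDerivAt_pow m w).const_mul (c m)) hbound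
    (mem_ball_self (by positivity))
    (summable_of_ne_finset_zero (s := {0}) fun m hm => by simp_all)
    (mem_ball_zero_iff.2 (lt_add_one ‖z‖))
  refine hderiv.congr_deriv ?_
  rw [(hsum z).tsum_eq_zero_add]
  simp only [hshift]
  simp

lemma hasDerivAt_besselClifford (b z : ℝ) :
    HasDerivAt (besselClifford b) (besselClifford (b + 1) z) z := by
  have hderiv := hasDerivAt_tsum_mul_pow (c := besselCliffordCoeff b) (z := z) (by
    simpa only [add_one_mul_besselCliffordCoeff_add_one] using summable_besselClifford (b + 1))
  simp only [add_one_mul_besselCliffordCoeff_add_one] at hderiv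
  exact hderiv

lemma besselClifford_eq_add (b z : ℝ) :
    besselClifford b z = (b + 1) * besselClifford (b + 1) z + z * besselClifford (b + 2) z := by
  have hshift : HasSum (fun m : ℕ => m * (besselCliffordCoeff (b + 1) m * z ^ m))
      (z * besselClifford (b + 2) z) := by
    have hterm : ∀ m : ℕ, ((m + 1 : ℕ) : ℝ) * (besselCliffordCoeff (b + 1) (m + 1) * z ^ (m + 1))
        = z * (besselCliffordCoeff (b + 2) m * z ^ m) := fun m => by
      rw [show b + 2 = b + 1 + 1 by ring, ← add_one_mul_besselCliffordCoeff_add_one (b + 1) m]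
      push_cast
      ring
    rw [← hasSum_nat_add_iff' 1]
    simp only [hterm, Finset.sum_range_one, Nat.cast_zero, zero_mul, sub_zero]
    exact (summable_besselClifford (b + 2) z).hasSum.mul_left z
  have hsum := ((summable_besselClifford (b + 1) z).hasSum.mul_left (b + 1)).add hshift
  refine Eq.trans (tsum_congr fun m => ?_) hsum.tsum_eq
  rw [besselCliffordCoeff_eq_mul]
  ring

lemma besselClifford_zero (b : ℝ) : besselClifford b 0 = (Gamma (b + 1))⁻¹ := by
  rw [besselClifford, tsum_eq_single 0 fun m hm => by simp [hm]]
  simp [besselCliffordCoeff]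

/-! ### Wronskians -/

lemma besselClifford_wronskian (b z : ℝ) :
    z * besselClifford (b + 1) z * besselClifford (-b) z
      - besselClifford b z * besselClifford (-b - 1) z = sin (π * b) / π := by
  have hshift : -b - 1 + 1 = -b := by ring
  have hderiv : ∀ z, HasDerivAt (fun z => z * besselClifford (b + 1) z * besselClifford (-b) z
      - besselClifford b z * besselClifford (-b - 1) z) 0 z := fun z => by
    refine ((((hasDerivAt_id z).mul (hasDerivAt_besselClifford (b + 1) z)).mul
      (hasDerivAt_besselClifford (-b) z)).sub ((hasDerivAt_besselClifford b z).mul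
      (hasDerivAt_besselClifford (-b - 1) z))).congr_deriv ?_
    have hb := besselClifford_eq_add b z
    have hb' := besselClifford_eq_add (-b - 1) z
    rw [hshift, show -b - 1 + 2 = -b + 1 by ring] at hb'
    rw [hshift, show b + 1 + 1 = b + 2 by ring]
    simp only [id, Pi.mul_apply]
    linear_combination -besselClifford (-b) z * hb - besselClifford (b + 1) z * hb'
  have hreflect := Gamma_mul_Gamma_one_sub (-b)
  rw [show (1 : ℝ) - -b = b + 1 by ring, mul_neg, sin_neg] at hreflect
  rw [is_const_of_deriv_eq_zero (fun z => (hderiv z).differentiableAt) (fun z => (hderiv z).deriv)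
    z 0]
  simp only [besselClifford_zero, hshift, zero_mul, zero_sub]
  rw [← mul_inv, mul_comm, hreflect, inv_div, neg_div, neg_neg]

lemma hasDerivAt_besselClifford_extGamma_wronskian (b : ℝ) (hz : 0 < z) :
    HasDerivAt (fun z => besselClifford b z * extGamma (b + 1) z
      + z * besselClifford (b + 1) z * extGamma b z) 0 z := by
  refine (((hasDerivAt_besselClifford b z).mul (hasDerivAt_extGamma (b + 1) hz)).add
    (((hasDerivAt_id z).mul (hasDerivAt_besselClifford (b + 1) z)).mul
    (hasDerivAt_extGamma b hz))).congr_deriv ?_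
  rw [show b + 1 + 1 = b + 2 by ring, add_sub_cancel_right]
  simp only [id, Pi.mul_apply]
  linear_combination -extGamma b z * besselClifford_eq_add b z
    + besselClifford (b + 1) z * extGamma_add_one b hz

lemma tendsto_besselClifford_extGamma_wronskian (hb : 0 < b) :
    Tendsto (fun z => besselClifford b z * extGamma (b + 1) z
      + z * besselClifford (b + 1) z * extGamma b z) (𝓝[>] 0) (𝓝 1) := by
  have hA : ∀ c, Tendsto (besselClifford c) (𝓝[>] 0) (𝓝 (Gamma (c + 1))⁻¹) := fun c => by
    rw [← besselClifford_zero]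
    exact (hasDerivAt_besselClifford c 0).continuousAt.tendsto.mono_left nhdsWithin_le_nhds
  have hid : Tendsto (fun z : ℝ => z) (𝓝[>] 0) (𝓝 0) := tendsto_id.mono_left nhdsWithin_le_nhds
  have hlim := ((hA b).mul (tendsto_extGamma_nhdsGT_zero (by linarith : 0 < b + 1))).add
    ((hid.mul (hA (b + 1))).mul (tendsto_extGamma_nhdsGT_zero hb))
  rwa [inv_mul_cancel₀ (Gamma_pos_of_pos (by linarith)).ne', zero_mul, zero_mul, add_zero] at hlim

lemma besselClifford_extGamma_wronskian_of_pos (hb : 0 < b) (hz : 0 < z) :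
    besselClifford b z * extGamma (b + 1) z + z * besselClifford (b + 1) z * extGamma b z = 1 := by
  have hderiv : ∀ w ∈ Ioi (0 : ℝ), HasDerivAt (fun z => besselClifford b z * extGamma (b + 1) z
      + z * besselClifford (b + 1) z * extGamma b z) 0 w :=
    fun w hw => hasDerivAt_besselClifford_extGamma_wronskian b hw
  refine tendsto_nhds_unique (tendsto_const_nhds.congr' ?_)
    (tendsto_besselClifford_extGamma_wronskian hb)
  filter_upwards [self_mem_nhdsWithin] with w hw
  exact isOpen_Ioi.is_const_of_deriv_eq_zero isPreconnected_Ioi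
    (fun w hw => (hderiv w hw).differentiableAt.differentiableWithinAt)
    (fun w hw => (hderiv w hw).deriv) hz hw

-- By the two recurrences the Wronskian is unchanged by `b ↦ b + 1`, which reduces to `b > 0`.
lemma besselClifford_extGamma_wronskian (b : ℝ) (hz : 0 < z) :
    besselClifford b z * extGamma (b + 1) z + z * besselClifford (b + 1) z * extGamma b z = 1 := by
  obtain ⟨n, hn⟩ := exists_nat_gt (-b)
  induction n generalizing b with
  | zero => exact besselClifford_extGamma_wronskian_of_pos (by simpa using hn) hz
  | succ n ih =>
    have hstep := ih (b + 1) (by push_cast at hn; linarith)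
    have hH := extGamma_add_one (b + 1) hz
    rw [show b + 1 + 1 = b + 2 by ring] at hstep hH
    rw [add_sub_cancel_right] at hH
    linear_combination hstep + extGamma (b + 1) z * besselClifford_eq_add b z
      - besselClifford (b + 1) z * hH

lemma sin_mul_extGamma_neg (b : ℝ) (hz : 0 < z) :
    sin (π * b) / π * extGamma (-b) z
      = z ^ (-b) * besselClifford (-b) z - besselClifford b z := by
  have hW := besselClifford_extGamma_wronskian b hz
  have hW' := besselClifford_extGamma_wronskian (-b - 1) hz
  rw [sub_add_cancel] at hW'
  have hneg := extGamma_neg b hz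
  have hneg' : z * extGamma (-b - 1) z = z ^ (-b) * extGamma (b + 1) z := by
    rw [← neg_add', extGamma_neg (b + 1) hz, neg_add', rpow_sub_one hz.ne']
    field_simp
  rw [← besselClifford_wronskian b z]
  linear_combination besselClifford (-b) z * z ^ (-b) * hW - besselClifford b z * hW'
    + z * besselClifford (b + 1) z * besselClifford (-b) z * hneg
    + besselClifford b z * besselClifford (-b) z * hneg'

/-! ### The integral representation of `K` -/

lemma besselI_eq_rpow_mul_besselClifford (b : ℝ) (hx : 0 < x) :
    besselI b x = (x / 2) ^ b * besselClifford b (x ^ 2 / 4) := by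
  unfold besselI besselClifford
  rw [← tsum_mul_left]
  refine tsum_congr fun m => ?_
  rw [rpow_add (half_pos hx), show (2 : ℝ) * m = (2 * m : ℕ) by push_cast; ring, rpow_natCast,
    pow_mul, div_pow, show (2 : ℝ) ^ 2 = 4 by norm_num, besselCliffordCoeff]
  ring

lemma besselI_neg_sub_besselI (b : ℝ) (hx : 0 < x) :
    besselI (-b) x - besselI b x
      = sin (b * π) / π * ((x / 2) ^ b * extGamma (-b) (x ^ 2 / 4)) := by
  have hsq : (x ^ 2 / 4) ^ (-b) = (x / 2) ^ (-b) * (x / 2) ^ (-b) := by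
    rw [← mul_rpow (by positivity) (by positivity)]
    ring_nf
  have hcancel : (x / 2) ^ b * (x / 2) ^ (-b) = 1 := by
    rw [← rpow_add (half_pos hx), add_neg_cancel, rpow_zero]
  have hH := sin_mul_extGamma_neg b (show 0 < x ^ 2 / 4 by positivity)
  rw [hsq, mul_comm π b] at hH
  rw [besselI_eq_rpow_mul_besselClifford _ hx, besselI_eq_rpow_mul_besselClifford _ hx]
  linear_combination -(x / 2) ^ b * hH
    - (x / 2) ^ (-b) * besselClifford (-b) (x ^ 2 / 4) * hcancel

lemma eventually_sin_mul_pi_ne_zero (a : ℝ) : ∀ᶠ b in 𝓝[≠] a, sin (b * π) ≠ 0 := by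
  by_cases hsin : sin (a * π) = 0
  · have hderiv : HasDerivAt (fun b => sin (b * π)) (cos (a * π) * (1 * π)) a :=
      ((hasDerivAt_id a).mul_const π).sin
    have hcos : cos (a * π) ≠ 0 := fun hcos => by
      simpa [hsin, hcos] using sin_sq_add_cos_sq (a * π)
    exact hderiv.eventually_ne (mul_ne_zero hcos (by simp [pi_ne_zero]))
  · have hcont : ContinuousAt (fun b => sin (b * π)) a := by fun_prop
    exact (hcont.eventually_ne hsin).filter_mono nhdsWithin_le_nhds

lemma besselK_eq_rpow_mul_extGamma (a : ℝ) (hx : 0 < x) :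
    besselK a x = (x / 2) ^ a * extGamma (-a) (x ^ 2 / 4) / 2 := by
  have hcont : Continuous fun b => (x / 2) ^ b * extGamma (-b) (x ^ 2 / 4) / 2 := by
    have hpow : Continuous fun b : ℝ => (x / 2) ^ b := continuous_const_rpow (half_pos hx).ne'
    have hH := (continuous_extGamma_left (show 0 < x ^ 2 / 4 by positivity)).comp continuous_neg
    exact (hpow.mul hH).div_const 2
  refine Tendsto.limUnder_eq ((hcont.tendsto a).mono_left nhdsWithin_le_nhds |>.congr' ?_)
  filter_upwards [eventually_sin_mul_pi_ne_zero a] with b hb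
  rw [besselI_neg_sub_besselI b hx]
  field_simp

lemma besselKt_eq_extGamma (a : ℝ) (hx : 0 < x) :
    besselKt a x = extGamma (-a) (x ^ 2 / 4) / 2 := by
  rw [besselKt, besselK_eq_rpow_mul_extGamma a hx, ← mul_div_assoc, ← mul_assoc,
    ← rpow_add (half_pos hx), neg_add_cancel, rpow_zero, one_mul]

/-! ### The differential equation -/

lemma hasDerivAt_besselKt (a : ℝ) (hx : 0 < x) :
    HasDerivAt (besselKt a) (-(x / 2) * besselKt (a + 1) x) x := by
  have hsq : HasDerivAt (fun x : ℝ => x ^ 2 / 4) (x / 2) x :=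
    ((hasDerivAt_pow 2 x).div_const 4).congr_deriv (by norm_num; ring)
  have hH := ((hasDerivAt_extGamma (-a) (show 0 < x ^ 2 / 4 by positivity)).comp x hsq).div_const 2
  have heq : besselKt a =ᶠ[𝓝 x] fun x => extGamma (-a) (x ^ 2 / 4) / 2 := by
    filter_upwards [Ioi_mem_nhds hx] with y hy using besselKt_eq_extGamma a hy
  refine (heq.hasDerivAt_iff.2 hH).congr_deriv ?_
  rw [besselKt_eq_extGamma (a + 1) hx, neg_add']
  ring

lemma besselKt_eq_add (a : ℝ) (hx : 0 < x) :
    besselKt a x = x ^ 2 / 4 * besselKt (a + 2) x - (a + 1) * besselKt (a + 1) x := by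
  have hrec := extGamma_add_one (-a - 1) (show 0 < x ^ 2 / 4 by positivity)
  rw [sub_add_cancel, ← neg_add', show -(a + 1) - 1 = -(a + 2) by ring] at hrec
  simp only [besselKt_eq_extGamma _ hx, hrec]
  ring

lemma eulerOp_besselKt (a : ℝ) (hx : 0 < x) :
    eulerOp (besselKt a) x = -(x ^ 2 / 2) * besselKt (a + 1) x := by
  rw [eulerOp, (hasDerivAt_besselKt a hx).deriv]
  ring

lemma besselQ_zero_besselKt (ν : ℝ) (hx : 0 < x) : besselQ ν 0 (besselKt (ν / 2)) x = 0 := by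
  have hfirst : (fun y => eulerOp (besselKt (ν / 2)) y + (0 + ν) * besselKt (ν / 2) y) =ᶠ[𝓝 x]
      fun y => -(y ^ 2 / 2) * besselKt (ν / 2 + 1) y + ν * besselKt (ν / 2) y := by
    filter_upwards [Ioi_mem_nhds hx] with y hy
    rw [eulerOp_besselKt _ hy, zero_add]
  have hsq : HasDerivAt (fun y : ℝ => -(y ^ 2 / 2)) (-x) x :=
    ((hasDerivAt_pow 2 x).div_const 2).neg.congr_deriv (by norm_num)
  have hderiv := (hsq.mul (hasDerivAt_besselKt (ν / 2 + 1) hx)).add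
    ((hasDerivAt_besselKt (ν / 2) hx).const_mul ν)
  have hrec := besselKt_eq_add (ν / 2) hx
  rw [besselQ, eulerOp, (hfirst.hasDerivAt_iff.2 hderiv).deriv, add_assoc (ν / 2) 1 1,
    one_add_one_eq_two]
  linear_combination -x ^ 2 * hrec

lemma eqOn_eulerOp {S : Set ℝ} {u v : ℝ → ℝ} (hS : IsOpen S) (huv : EqOn u v S) :
    EqOn (eulerOp u) (eulerOp v) S := fun x hx => by
  rw [eulerOp, eulerOp, huv.deriv hS hx]

lemma eqOn_besselQ {S : Set ℝ} {u v : ℝ → ℝ} (ν c : ℝ) (hS : IsOpen S) (huv : EqOn u v S) :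
    EqOn (besselQ ν c u) (besselQ ν c v) S := fun x hx => by
  have hfirst : EqOn (fun y => eulerOp u y + (c + ν) * u y)
      (fun y => eulerOp v y + (c + ν) * v y) S := fun y hy => by
    simp only [eqOn_eulerOp hS huv hy, huv hy]
  rw [besselQ, besselQ, eqOn_eulerOp hS hfirst hx, eqOn_eulerOp hS huv hx, huv hx]

lemma besselQ_zero_right (ν c : ℝ) : besselQ ν c 0 = 0 := by
  ext x
  simp [besselQ, eulerOp]

lemma Dop_besselKt (μ ν : ℝ) (hx : 0 < x) : Dop μ ν (besselKt (ν / 2)) x = 0 := by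
  have hQ : EqOn (besselQ ν 0 (besselKt (ν / 2))) 0 (Ioi 0) :=
    fun y hy => besselQ_zero_besselKt ν hy
  rw [Dop, eqOn_besselQ ν μ isOpen_Ioi hQ hx, besselQ_zero_right, Pi.zero_apply, zero_div]

/-! ### Square integrability -/

lemma isBigO_besselKt (hk : 0 < k) (hak : a < k) :
    besselKt a =O[𝓟 (Ioi 0)] fun x => x ^ (-(2 * k)) := by
  refine IsBigO.of_bound (k ^ k * 4 ^ k * Gamma (-a + k) / 2)
    (eventually_principal.2 fun x hx => ?_)
  have hx : 0 < x := hx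
  have hscale : (x ^ 2 / 4) ^ (-k) = 4 ^ k * x ^ (-(2 * k)) := by
    rw [div_rpow (by positivity) (by norm_num), rpow_neg (by norm_num : (0 : ℝ) ≤ 4),
      div_inv_eq_mul, ← rpow_natCast x 2, ← rpow_mul hx.le, mul_comm]
    push_cast
    rw [mul_neg]
  have hle := extGamma_le hk (show 0 < -a + k by linarith) (show 0 < x ^ 2 / 4 by positivity)
  rw [besselKt_eq_extGamma a hx, norm_of_nonneg (div_nonneg (extGamma_nonneg _ _) two_pos.le),
    norm_of_nonneg (by positivity)]
  rw [hscale] at hle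
  linarith

lemma isBigO_besselKt_sq (hk : 0 < k) (hak : 4 * a < k) :
    (fun x => besselKt a x ^ 2) =O[𝓟 (Ioi 0)] fun x => x ^ (-k) := by
  refine ((isBigO_besselKt (k := k / 4) (by linarith) (by linarith)).pow 2).congr' .rfl
    (eventually_principal.2 fun x hx => ?_)
  dsimp only
  rw [← rpow_mul_natCast (le_of_lt hx)]
  congr 1
  push_cast
  ring

lemma integrableOn_besselKt_sq_mul_rpow (hp : -1 < p) (hap : 4 * a < p + 1) :
    IntegrableOn (fun x => besselKt a x ^ 2 * x ^ p) (Ioi 0) := by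
  obtain ⟨k, hk, hkp⟩ := exists_between (max_lt (show 0 < p + 1 by linarith) hap)
  have hcont : ContinuousOn (fun x => besselKt a x ^ 2) (Ioi 0) := fun x hx =>
    ((hasDerivAt_besselKt a hx).continuousAt.pow 2).continuousWithinAt
  have hzero := isBigO_besselKt_sq ((le_max_left _ _).trans_lt hk) ((le_max_right _ _).trans_lt hk)
  have htop := isBigO_besselKt_sq (a := a) (k := max (p + 2) (4 * a + 1)) (by grind) (by grind)
  have hint := mellin_convergent_of_isBigO_scalar (s := p + 1)
    (hcont.locallyIntegrableOn measurableSet_Ioi)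
    (htop.mono (le_principal_iff.2 (Ioi_mem_atTop 0))) (by grind)
    (hzero.mono inf_le_right) hkp
  simpa only [add_sub_cancel_right, mul_comm] using hint

end

lemma IntCond.abs_lt {μ ν : ℤ} (h : IntCond μ ν) : |ν| < μ + 2 := by
  obtain ⟨hν, hνμ, -, hne⟩ := h
  rw [_root_.abs_lt]
  omega

theorem besselKt_eigenfunction_general {μ ν : ℝ} (hν : |ν| < μ + 2) :
    IntegrableOn (fun x => besselKt (ν / 2) x ^ 2 * x ^ (μ + ν + 1)) (Ioi 0)
      ∧ ∀ x > 0, Dop μ ν (besselKt (ν / 2)) x = 0 := by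
  obtain ⟨hlower, hupper⟩ := abs_lt.1 hν
  exact ⟨integrableOn_besselKt_sq_mul_rpow (by linarith) (by linarith),
    fun x hx => Dop_besselKt μ ν hx⟩

/-- The normalized K-Bessel function `K̃_{ν/2}` belongs to `L²(ℝ_+, x^{μ+ν+1}dx)` and is an
eigenfunction of `D_{μ,ν}` with eigenvalue `λ_0^{μ,ν} = 0`. -/
theorem besselKt_eigenfunction (μ ν : ℤ) (hcond : IntCond μ ν) :
    MeasureTheory.IntegrableOn
        (fun x => besselKt ((ν : ℝ) / 2) x ^ 2 * x ^ ((μ : ℝ) + ν + 1)) (Set.Ioi 0)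
      ∧ ∀ x > (0 : ℝ), Dop μ ν (besselKt ((ν : ℝ) / 2)) x = 0 := by
  exact besselKt_eigenfunction_general (mod_cast hcond.abs_lt)
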